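/- arXiv:2506.07868 — 6 statements merged into one kernel-verified Lean document; each statement's English description precedes it below -/
import Mathlib

section
/- Let ε > 0, let Δ be a positive integer, set s = Δ/ε, and let ℓ ≤ u be integers. For all integers μ and μ′ with ℓ ≤ μ ≤ u, ℓ ≤ μ′ ≤ u and |μ − μ′| ≤ Δ, and for every set S ⊆ ℤ, the censored discrete Laplace random variables Y ~ CensoredDiscreteLaplace(μ, s, ℓ, u) and Y′ ~ CensoredDiscreteLaplace(μ′, s, ℓ, u) satisfy Pr[Y ∈ S] ≤ e^ε · Pr[Y′ ∈ S]. In other words, the censored discrete Laplace mechanism applied to an integer-valued statistic of global sensitivity Δ is ε-differentially private. -/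
/-- Probability mass function of the discrete Laplace distribution with shift `μ` and scale `s`. -/
noncomputable def dLapPMF (μ : ℤ) (s : ℝ) (x : ℤ) : ℝ :=
  ((Real.exp (1/s) - 1) / (Real.exp (1/s) + 1)) * Real.exp (-|(x : ℝ) - (μ : ℝ)| / s)

/-- Cumulative distribution function of the discrete Laplace distribution. -/
noncomputable def dLapCDF (μ : ℤ) (s : ℝ) (x : ℤ) : ℝ :=
  if x ≤ μ then (Real.exp (1/s) / (Real.exp (1/s) + 1)) * Real.exp (-((μ : ℝ) - (x : ℝ)) / s)
  else 1 - (1 / (Real.exp (1/s) + 1)) * Real.exp (-((x : ℝ) - (μ : ℝ)) / s)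

/-- Probability mass function of the censored discrete Laplace distribution
`CensoredDiscreteLaplace(μ, s, ℓ, u)`, i.e. of `Y = max(ℓ, min(Z, u))` where `Z` is
discrete Laplace with shift `μ` and scale `s`. -/
noncomputable def cdLapPMF (μ : ℤ) (s : ℝ) (ℓ u : ℤ) (k : ℤ) : ℝ :=
  if k = ℓ then dLapCDF μ s ℓ
  else if k = u then 1 - dLapCDF μ s (u - 1)
  else if ℓ < k ∧ k < u then dLapPMF μ s k
  else 0

/-!
Moving the shift of a discrete Laplace variable from `μ` to `μ'` multiplies each mass by at most
`exp (|μ - μ'| / s)`, by the triangle inequality. The two masses at the endpoints of a censored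
variable are tail probabilities, that is, sums of such masses, so they obey the same bound wherever
the shifts lie. The upper tail reduces to the lower one by the symmetry `Z ↦ -Z`.
-/

open Filter Topology

section DiscreteLaplace

variable {μ μ' x : ℤ} {s ε : ℝ}

theorem exp_sub_one_div_exp_add_one_nonneg {t : ℝ} (ht : 0 ≤ t) :
    0 ≤ (Real.exp t - 1) / (Real.exp t + 1) :=
  div_nonneg (sub_nonneg.2 (Real.one_le_exp ht)) (by positivity)

theorem dLapPMF_nonneg (hs : 0 < s) : 0 ≤ dLapPMF μ s x :=
  mul_nonneg (exp_sub_one_div_exp_add_one_nonneg (by positivity)) (Real.exp_nonneg _)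

theorem dLapPMF_le_exp_mul (hs : 0 < s) (h : |(μ : ℝ) - μ'| ≤ ε * s) :
    dLapPMF μ s x ≤ Real.exp ε * dLapPMF μ' s x := by
  have triangle : |(x : ℝ) - μ'| ≤ |(x : ℝ) - μ| + |(μ : ℝ) - μ'| := abs_sub_le _ _ _
  have exp_le : Real.exp (-|(x : ℝ) - μ| / s) ≤
      Real.exp ε * Real.exp (-|(x : ℝ) - μ'| / s) := by
    rw [← Real.exp_add, Real.exp_le_exp, div_le_iff₀ hs, add_mul, div_mul_cancel₀ _ hs.ne']
    linarith
  unfold dLapPMF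
  rw [mul_left_comm]
  exact mul_le_mul_of_nonneg_left exp_le (exp_sub_one_div_exp_add_one_nonneg (by positivity))

theorem dLapCDF_of_le (h : x ≤ μ) :
    dLapCDF μ s x = Real.exp (1 / s) / (Real.exp (1 / s) + 1) *
      Real.exp (-((μ : ℝ) - x) / s) :=
  if_pos h

-- Beyond the `else` branch, this holds at `μ - 1` and `μ` because the two closed forms agree there.
theorem dLapCDF_of_sub_one_le (h : μ - 1 ≤ x) :
    dLapCDF μ s x = 1 - 1 / (Real.exp (1 / s) + 1) * Real.exp (-((x : ℝ) - μ) / s) := by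
  obtain rfl | rfl | hlt : x = μ - 1 ∨ x = μ ∨ μ < x := by omega
  · rw [dLapCDF_of_le (by omega)]
    have lower : -((μ : ℝ) - ((μ - 1 : ℤ) : ℝ)) / s = -(1 / s) := by push_cast; ring
    have upper : -(((μ - 1 : ℤ) : ℝ) - μ) / s = 1 / s := by push_cast; ring
    rw [lower, upper, Real.exp_neg]
    field_simp
    ring
  · rw [dLapCDF_of_le le_rfl, sub_self, neg_zero, zero_div, Real.exp_zero]
    field_simp
    ring
  · exact if_neg hlt.not_ge

theorem dLapCDF_sub_dLapCDF_sub_one : dLapCDF μ s x - dLapCDF μ s (x - 1) = dLapPMF μ s x := by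
  rcases le_or_gt x μ with h | h
  · have shift : -((μ : ℝ) - ((x - 1 : ℤ) : ℝ)) / s = -((μ : ℝ) - x) / s + -(1 / s) := by
      push_cast; ring
    have habs : |(x : ℝ) - μ| = μ - x := by
      rw [abs_sub_comm, abs_of_nonneg (sub_nonneg.2 (mod_cast h))]
    rw [dLapCDF_of_le h, dLapCDF_of_le (by omega), dLapPMF, shift, habs, Real.exp_add,
      Real.exp_neg (1 / s)]
    field_simp
  · have shift : -(((x - 1 : ℤ) : ℝ) - μ) / s = -((x : ℝ) - μ) / s + 1 / s := by
      push_cast; ring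
    have habs : |(x : ℝ) - μ| = x - μ := abs_of_pos (sub_pos.2 (mod_cast h))
    rw [dLapCDF_of_sub_one_le (by omega), dLapCDF_of_sub_one_le (by omega), dLapPMF, shift, habs,
      Real.exp_add]
    ring

theorem one_sub_dLapCDF_sub_one : 1 - dLapCDF μ s (x - 1) = dLapCDF (-μ) s (-x) := by
  rcases le_or_gt μ x with h | h
  · have shift : -(((x - 1 : ℤ) : ℝ) - μ) / s =
        1 / s + -(((-μ : ℤ) : ℝ) - ((-x : ℤ) : ℝ)) / s := by
      push_cast; ring
    rw [dLapCDF_of_sub_one_le (by omega), dLapCDF_of_le (by omega), shift, Real.exp_add]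
    ring
  · have shift : -(((-x : ℤ) : ℝ) - ((-μ : ℤ) : ℝ)) / s =
        1 / s + -((μ : ℝ) - ((x - 1 : ℤ) : ℝ)) / s := by
      push_cast; ring
    rw [dLapCDF_of_le (by omega), dLapCDF_of_sub_one_le (by omega), shift, Real.exp_add]
    ring

theorem tendsto_dLapCDF_atBot (hs : 0 < s) : Tendsto (dLapCDF μ s) atBot (𝓝 0) := by
  have sub_shift : Tendsto (fun x : ℤ ↦ (x : ℝ) - μ) atBot atBot :=
    tendsto_atBot_add_const_right _ _ (tendsto_intCast_atBot_iff.2 tendsto_id)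
  have exponent : Tendsto (fun x : ℤ ↦ -((μ : ℝ) - x) / s) atBot atBot := by
    simpa only [neg_sub] using sub_shift.atBot_div_const hs
  have lower_branch := (Real.tendsto_exp_atBot.comp exponent).const_mul
    (Real.exp (1 / s) / (Real.exp (1 / s) + 1))
  rw [mul_zero] at lower_branch
  refine lower_branch.congr' ?_
  filter_upwards [eventually_le_atBot μ] with x hx using (dLapCDF_of_le hx).symm

theorem hasSum_dLapPMF_sub_natCast (hs : 0 < s) :
    HasSum (fun n : ℕ ↦ dLapPMF μ s (x - n)) (dLapCDF μ s x) := by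
  rw [hasSum_iff_tendsto_nat_of_nonneg (fun _ ↦ dLapPMF_nonneg hs)]
  have partial_sum (N : ℕ) :
      ∑ n ∈ Finset.range N, dLapPMF μ s (x - n) = dLapCDF μ s x - dLapCDF μ s (x - N) := by
    simpa [← dLapCDF_sub_dLapCDF_sub_one, sub_sub] using
      Finset.sum_range_sub' (fun n : ℕ ↦ dLapCDF μ s (x - n)) N
  have sub_natCast : Tendsto (fun N : ℕ ↦ x - (N : ℤ)) atTop atBot :=
    tendsto_atBot_add_const_left _ x (tendsto_neg_atTop_atBot.comp tendsto_natCast_atTop_atTop)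
  simpa only [partial_sum, sub_zero, Function.comp_apply] using
    ((tendsto_dLapCDF_atBot hs).comp sub_natCast).const_sub (dLapCDF μ s x)

theorem dLapCDF_le_exp_mul (hs : 0 < s) (h : |(μ : ℝ) - μ'| ≤ ε * s) :
    dLapCDF μ s x ≤ Real.exp ε * dLapCDF μ' s x :=
  hasSum_le (fun _ ↦ dLapPMF_le_exp_mul hs h) (hasSum_dLapPMF_sub_natCast hs)
    ((hasSum_dLapPMF_sub_natCast hs).mul_left _)

end DiscreteLaplace

section Censored

variable {μ μ' ℓ u : ℤ} {s ε : ℝ}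

theorem cdLapPMF_le_exp_mul (hs : 0 < s) (h : |(μ : ℝ) - μ'| ≤ ε * s) (k : ℤ) :
    cdLapPMF μ s ℓ u k ≤ Real.exp ε * cdLapPMF μ' s ℓ u k := by
  unfold cdLapPMF
  split_ifs
  · exact dLapCDF_le_exp_mul hs h
  · have h_neg : |((-μ : ℤ) : ℝ) - ((-μ' : ℤ) : ℝ)| ≤ ε * s := by
      push_cast
      rwa [neg_sub_neg, abs_sub_comm]
    rw [one_sub_dLapCDF_sub_one, one_sub_dLapCDF_sub_one]
    exact dLapCDF_le_exp_mul hs h_neg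
  · exact dLapPMF_le_exp_mul hs h
  · rw [mul_zero]

theorem support_cdLapPMF_subset (hℓu : ℓ ≤ u) :
    Function.support (cdLapPMF μ s ℓ u) ⊆ Set.Icc ℓ u := by
  refine Function.support_subset_iff'.2 fun k hk ↦ ?_
  rw [Set.mem_Icc] at hk
  rw [cdLapPMF, if_neg (by omega), if_neg (by omega), if_neg (by omega)]

theorem summable_cdLapPMF (hℓu : ℓ ≤ u) : Summable (cdLapPMF μ s ℓ u) :=
  summable_of_hasFiniteSupport ((Set.finite_Icc ℓ u).subset (support_cdLapPMF_subset hℓu))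

end Censored

theorem censored_discrete_laplace_is_DP_general
    {ε : ℝ} (hε : 0 < ε) {Δ : ℝ} (hΔ : 0 < Δ) {ℓ u : ℤ} (hℓu : ℓ ≤ u)
    {μ μ' : ℤ} (hsens : |(μ : ℝ) - μ'| ≤ Δ) (S : Set ℤ) :
    ∑' k, S.indicator (cdLapPMF μ (Δ / ε) ℓ u) k ≤
      Real.exp ε * ∑' k, S.indicator (cdLapPMF μ' (Δ / ε) ℓ u) k := by
  have hs : 0 < Δ / ε := div_pos hΔ hε
  have h : |(μ : ℝ) - μ'| ≤ ε * (Δ / ε) := by rwa [mul_div_cancel₀ _ hε.ne']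
  rw [← tsum_mul_left]
  refine ((summable_cdLapPMF hℓu).indicator S).tsum_le_tsum (fun k ↦ ?_)
    (((summable_cdLapPMF hℓu).indicator S).mul_left _)
  rw [← Set.indicator_const_mul]
  exact Set.indicator_le_indicator (cdLapPMF_le_exp_mul hs h k)

/-- The censored discrete Laplace mechanism applied to an integer-valued statistic of
global sensitivity `Δ`, with scale `s = Δ/ε`, is `ε`-differentially private. -/
theorem censored_discrete_laplace_is_DP
    (ε : ℝ) (hε : 0 < ε) (Δ : ℤ) (hΔ : 0 < Δ)
    (ℓ u : ℤ) (hℓu : ℓ ≤ u)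
    (μ μ' : ℤ) (hμℓ : ℓ ≤ μ) (hμu : μ ≤ u) (hμ'ℓ : ℓ ≤ μ') (hμ'u : μ' ≤ u)
    (hsens : |μ - μ'| ≤ Δ) (S : Set ℤ) :
    (∑' k : ℤ, S.indicator (cdLapPMF μ ((Δ : ℝ) / ε) ℓ u) k)
      ≤ Real.exp ε * ∑' k : ℤ, S.indicator (cdLapPMF μ' ((Δ : ℝ) / ε) ℓ u) k :=
  censored_discrete_laplace_is_DP_general hε (mod_cast hΔ) hℓu (mod_cast hsens) S
end

section
/- Fix integers k ≥ 2 and c ≥ 2. For every integer n ≥ 0 and every integer y ≥ 0, the adaptive-sampler mass functions satisfy f_{(n,c)}(y) ≤ ((k+1)/(k−1))^{2c} · f_{(n+1,c)}(y) and f_{(n+1,c)}(y) ≤ ((k+1)/(k−1))^{2c} · f_{(n,c)}(y). Equivalently, the output of the adaptive sampler on inputs of length n is ε-differentially private with respect to insertion or deletion of one record, with ε = 2c · ln((k+1)/(k−1)). -/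
/-- Success probability of flip `i+1` of the adaptive sampler: `p_n(j) = 1/(max(n-j,0)+k)^c`
(natural subtraction truncates at zero). -/
noncomputable def pAdapt (k c n j : ℕ) : ℝ := 1 / (((n - j + k : ℕ) : ℝ)) ^ c

/-- Geometric PMF `Geom_q(i) = (1-q)^{i-1}·q` for `i ≥ 1`. -/
noncomputable def geomPMF (q : ℝ) (i : ℕ) : ℝ := (1 - q) ^ (i - 1) * q

/-- The adaptive-sampler output distribution `f_{(n,c)}` on ℕ:
`f_{(n,c)}(i) = p_n(i)·∏_{j=0}^{i-1}(1 - p_n(j))` for `i ≤ n`, and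
`f_{(n,c)}(i) = Geom_{1/k^c}(i-n)·∏_{j=0}^{n-1}(1 - p_n(j))` for `i > n`. -/
noncomputable def fAdapt (k c n i : ℕ) : ℝ :=
  if i ≤ n then pAdapt k c n i * ∏ j ∈ Finset.range i, (1 - pAdapt k c n j)
  else geomPMF (1 / (k : ℝ) ^ c) (i - n) * ∏ j ∈ Finset.range n, (1 - pAdapt k c n j)

/-!
A sampler on `n + 1` records that survives its first flip behaves like the sampler on `n` records,
so `f_{n+1}(y+1) = (1 - p_{n+1}(0)) · f_n(y)`. Comparing `f_{n+1}` with `f_n` thus amounts to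
comparing `f_n` at consecutive points; the same recursion reduces this to consecutive success
probabilities, whose ratio lies in `[1, ((k+1)/k)^c]`, and to the geometric tail, whose ratio lies
in `[1 - k^{-c}, 1]`. Altogether the likelihood ratios are at most
`((k+1)/k)^c / (1 - k^{-c}) ≤ ((k+1)/k)^c · (k/(k-1))^c = ((k+1)/(k-1))^c`,
the square root of the bound to be shown.
-/

lemma geomPMF_nonneg {q : ℝ} (hq₀ : 0 ≤ q) (hq₁ : q ≤ 1) (i : ℕ) : 0 ≤ geomPMF q i :=
  mul_nonneg (pow_nonneg (sub_nonneg.2 hq₁) _) hq₀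

lemma geomPMF_succ_le {q : ℝ} (hq₀ : 0 ≤ q) (hq₁ : q ≤ 1) (i : ℕ) :
    geomPMF q (i + 1) ≤ geomPMF q i :=
  mul_le_mul_of_nonneg_right
    (pow_le_pow_of_le_one (sub_nonneg.2 hq₁) (sub_le_self 1 hq₀) (by omega)) hq₀

lemma one_sub_mul_geomPMF_le {q : ℝ} (hq₀ : 0 ≤ q) (hq₁ : q ≤ 1) (i : ℕ) :
    (1 - q) * geomPMF q i ≤ geomPMF q (i + 1) := by
  unfold geomPMF
  rw [← mul_assoc, ← pow_succ']
  exact mul_le_mul_of_nonneg_right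
    (pow_le_pow_of_le_one (sub_nonneg.2 hq₁) (sub_le_self 1 hq₀) (by omega)) hq₀

section

variable (k c n : ℕ)

lemma pAdapt_succ_succ (j : ℕ) : pAdapt k c (n + 1) (j + 1) = pAdapt k c n j := by
  simp only [pAdapt, Nat.add_sub_add_right]

lemma pAdapt_of_le {n j : ℕ} (h : n ≤ j) : pAdapt k c n j = 1 / (k : ℝ) ^ c := by
  simp only [pAdapt, Nat.sub_eq_zero_of_le h, zero_add]

lemma pAdapt_nonneg (j : ℕ) : 0 ≤ pAdapt k c n j := by
  unfold pAdapt
  positivity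

lemma fAdapt_zero_right : fAdapt k c n 0 = pAdapt k c n 0 := by
  simp [fAdapt]

-- By truncated subtraction `geomPMF q 0 = q = geomPMF q 1`, which is why `y = 0` needs no
-- exception. Accordingly `fAdapt k c n` takes the same value at `n` and `n + 1`: in its definition
-- the geometric tail starts without the failure factor of flip `n + 1`.
lemma fAdapt_zero_left (y : ℕ) : fAdapt k c 0 y = geomPMF (1 / (k : ℝ) ^ c) y := by
  cases y <;> simp [fAdapt, pAdapt, geomPMF]

lemma fAdapt_succ_succ (y : ℕ) :
    fAdapt k c (n + 1) (y + 1) = (1 - pAdapt k c (n + 1) 0) * fAdapt k c n y := by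
  have hprod (m : ℕ) : ∏ j ∈ Finset.range (m + 1), (1 - pAdapt k c (n + 1) j)
      = (∏ j ∈ Finset.range m, (1 - pAdapt k c n j)) * (1 - pAdapt k c (n + 1) 0) := by
    simp only [Finset.prod_range_succ', pAdapt_succ_succ]
  simp only [fAdapt, Nat.add_le_add_iff_right, Nat.add_sub_add_right, pAdapt_succ_succ, hprod]
  split_ifs <;> ring

variable {k}

lemma pAdapt_monotone (hk : 0 < k) : Monotone (pAdapt k c n) := by
  intro i j hij
  unfold pAdapt
  have : 0 < n - j + k := by omega
  gcongr

lemma pAdapt_le (hk : 0 < k) (j : ℕ) : pAdapt k c n j ≤ 1 / (k : ℝ) ^ c :=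
  (pAdapt_monotone c n hk (le_max_right n j)).trans_eq (pAdapt_of_le k c (le_max_left n j))

lemma one_div_pow_le_one (hk : 0 < k) : 1 / (k : ℝ) ^ c ≤ 1 :=
  div_le_one_of_le₀ (one_le_pow₀ (by exact_mod_cast hk)) (by positivity)

lemma pAdapt_le_one (hk : 0 < k) (j : ℕ) : pAdapt k c n j ≤ 1 :=
  (pAdapt_le c n hk j).trans (one_div_pow_le_one c hk)

lemma one_le_add_one_div_pow (hk : 0 < k) : 1 ≤ (((k : ℝ) + 1) / k) ^ c :=
  one_le_pow₀ ((one_le_div (by exact_mod_cast hk)).2 (by linarith))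

lemma pAdapt_succ_le (hk : 0 < k) (j : ℕ) :
    pAdapt k c n (j + 1) ≤ (((k : ℝ) + 1) / k) ^ c * pAdapt k c n j := by
  have hk₀ : (0 : ℝ) < k := by exact_mod_cast hk
  have hle : (k : ℝ) ≤ (n - (j + 1) + k : ℕ) := by exact_mod_cast Nat.le_add_left k _
  have hpos : 0 < n - j + k := by omega
  have hbase : ((n - j + k : ℕ) : ℝ) ≤ ((k : ℝ) + 1) / k * (n - (j + 1) + k : ℕ) :=
    calc ((n - j + k : ℕ) : ℝ) ≤ (n - (j + 1) + k : ℕ) + 1 := by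
          exact_mod_cast (by omega : n - j + k ≤ n - (j + 1) + k + 1)
      _ ≤ (n - (j + 1) + k : ℕ) + (n - (j + 1) + k : ℕ) / (k : ℝ) := by
          gcongr
          exact (one_le_div hk₀).2 hle
      _ = ((k : ℝ) + 1) / k * (n - (j + 1) + k : ℕ) := by
          field_simp
  unfold pAdapt
  rw [mul_one_div, div_le_div_iff₀ (pow_pos (hk₀.trans_le hle) c)
    (pow_pos (Nat.cast_pos.2 hpos) c), one_mul, ← mul_pow]
  exact pow_le_pow_left₀ (by positivity) hbase c

lemma fAdapt_nonneg (hk : 0 < k) (y : ℕ) : 0 ≤ fAdapt k c n y := by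
  induction n generalizing y with
  | zero =>
    rw [fAdapt_zero_left]
    exact geomPMF_nonneg (by positivity) (one_div_pow_le_one c hk) y
  | succ n ih =>
    cases y with
    | zero => exact (pAdapt_nonneg k c (n + 1) 0).trans_eq (fAdapt_zero_right k c (n + 1)).symm
    | succ y =>
      rw [fAdapt_succ_succ]
      exact mul_nonneg (sub_nonneg.2 (pAdapt_le_one c (n + 1) hk 0)) (ih y)

lemma fAdapt_succ_right_le (hk : 0 < k) (y : ℕ) :
    fAdapt k c n (y + 1) ≤ (((k : ℝ) + 1) / k) ^ c * fAdapt k c n y := by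
  induction n generalizing y with
  | zero =>
    refine le_trans ?_
      (le_mul_of_one_le_left (fAdapt_nonneg c 0 hk y) (one_le_add_one_div_pow c hk))
    simp only [fAdapt_zero_left]
    exact geomPMF_succ_le (by positivity) (one_div_pow_le_one c hk) y
  | succ n ih =>
    have hfail : 0 ≤ 1 - pAdapt k c (n + 1) 0 := sub_nonneg.2 (pAdapt_le_one c (n + 1) hk 0)
    cases y with
    | zero =>
      calc fAdapt k c (n + 1) 1
          = (1 - pAdapt k c (n + 1) 0) * pAdapt k c (n + 1) 1 := by
            rw [fAdapt_succ_succ, fAdapt_zero_right, pAdapt_succ_succ]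
        _ ≤ pAdapt k c (n + 1) 1 :=
            mul_le_of_le_one_left (pAdapt_nonneg k c _ _) (sub_le_self 1 (pAdapt_nonneg k c _ _))
        _ ≤ (((k : ℝ) + 1) / k) ^ c * fAdapt k c (n + 1) 0 := by
            rw [fAdapt_zero_right]
            exact pAdapt_succ_le c (n + 1) hk 0
    | succ y =>
      rw [fAdapt_succ_succ, fAdapt_succ_succ, mul_left_comm]
      exact mul_le_mul_of_nonneg_left (ih y) hfail

lemma one_sub_mul_fAdapt_le_succ_right (hk : 0 < k) (y : ℕ) :
    (1 - 1 / (k : ℝ) ^ c) * fAdapt k c n y ≤ fAdapt k c n (y + 1) := by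
  induction n generalizing y with
  | zero =>
    simp only [fAdapt_zero_left]
    exact one_sub_mul_geomPMF_le (by positivity) (one_div_pow_le_one c hk) y
  | succ n ih =>
    have hfail : 0 ≤ 1 - pAdapt k c (n + 1) 0 := sub_nonneg.2 (pAdapt_le_one c (n + 1) hk 0)
    cases y with
    | zero =>
      rw [fAdapt_succ_succ, fAdapt_zero_right, fAdapt_zero_right, ← pAdapt_succ_succ k c n]
      exact mul_le_mul (sub_le_sub_left (pAdapt_le c (n + 1) hk 0) 1)
        (pAdapt_monotone c (n + 1) hk zero_le_one) (pAdapt_nonneg k c _ _) hfail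
    | succ y =>
      rw [fAdapt_succ_succ, fAdapt_succ_succ, mul_left_comm]
      exact mul_le_mul_of_nonneg_left (ih y) hfail

lemma one_sub_mul_fAdapt_le_succ_left (hk : 0 < k) (y : ℕ) :
    (1 - 1 / (k : ℝ) ^ c) * fAdapt k c n y ≤ (((k : ℝ) + 1) / k) ^ c * fAdapt k c (n + 1) y := by
  cases y with
  | zero =>
    simp only [fAdapt_zero_right, ← pAdapt_succ_succ k c n]
    exact (mul_le_of_le_one_left (pAdapt_nonneg k c _ _) (sub_le_self 1 (by positivity))).trans
      (pAdapt_succ_le c (n + 1) hk 0)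
  | succ y =>
    calc (1 - 1 / (k : ℝ) ^ c) * fAdapt k c n (y + 1)
        ≤ (1 - pAdapt k c (n + 1) 0) * ((((k : ℝ) + 1) / k) ^ c * fAdapt k c n y) :=
          mul_le_mul (sub_le_sub_left (pAdapt_le c (n + 1) hk 0) 1)
            (fAdapt_succ_right_le c n hk y) (fAdapt_nonneg c n hk _)
            (sub_nonneg.2 (pAdapt_le_one c (n + 1) hk 0))
      _ = (((k : ℝ) + 1) / k) ^ c * fAdapt k c (n + 1) (y + 1) := by
          rw [fAdapt_succ_succ, mul_left_comm]

lemma one_sub_mul_fAdapt_succ_left_le (hk : 0 < k) (y : ℕ) :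
    (1 - 1 / (k : ℝ) ^ c) * fAdapt k c (n + 1) y ≤ fAdapt k c n y := by
  have hq : 0 ≤ 1 - 1 / (k : ℝ) ^ c := sub_nonneg.2 (one_div_pow_le_one c hk)
  cases y with
  | zero =>
    simp only [fAdapt_zero_right, ← pAdapt_succ_succ k c n]
    exact (mul_le_of_le_one_left (pAdapt_nonneg k c _ _) (sub_le_self 1 (by positivity))).trans
      (pAdapt_monotone c (n + 1) hk zero_le_one)
  | succ y =>
    have hdrop : fAdapt k c (n + 1) (y + 1) ≤ fAdapt k c n y := by
      rw [fAdapt_succ_succ]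
      exact mul_le_of_le_one_left (fAdapt_nonneg c n hk y) (sub_le_self 1 (pAdapt_nonneg k c _ _))
    exact (mul_le_mul_of_nonneg_left hdrop hq).trans (one_sub_mul_fAdapt_le_succ_right c n hk y)

end

lemma one_sub_pow_le_one_sub_pow {R : Type*} [Ring R] [PartialOrder R] [IsOrderedRing R] {x : R}
    (hx₀ : 0 ≤ x) (hx₁ : x ≤ 1) {c : ℕ} (hc : c ≠ 0) : (1 - x) ^ c ≤ 1 - x ^ c := by
  rw [le_sub_iff_add_le]
  simpa only [sub_add_cancel, one_pow] using pow_add_pow_le (sub_nonneg.2 hx₁) hx₀ hc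

lemma le_div_pow_mul_of_one_sub_mul_le {x : ℝ} (hx : 1 < x) {c : ℕ} (hc : c ≠ 0) {a b : ℝ}
    (ha : 0 ≤ a) (h : (1 - 1 / x ^ c) * a ≤ ((x + 1) / x) ^ c * b) :
    a ≤ ((x + 1) / (x - 1)) ^ c * b := by
  have hx₀ : 0 < x := zero_lt_one.trans hx
  have hx₁ : 0 < x - 1 := sub_pos.2 hx
  have hfail : ((x - 1) / x) ^ c ≤ 1 - 1 / x ^ c := by
    rw [sub_div, div_self hx₀.ne', ← one_div_pow]
    exact one_sub_pow_le_one_sub_pow (by positivity) (div_le_one_of_le₀ hx.le hx₀.le) hc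
  have hratio : (x + 1) / x = (x - 1) / x * ((x + 1) / (x - 1)) := by
    field_simp
  rw [hratio, mul_pow, mul_assoc] at h
  exact le_of_mul_le_mul_left ((mul_le_mul_of_nonneg_right hfail ha).trans h) (by positivity)

lemma monotone_add_one_div_sub_one_pow {x : ℝ} (hx : 1 < x) :
    Monotone fun c : ℕ ↦ ((x + 1) / (x - 1)) ^ c :=
  pow_right_mono₀ ((one_le_div (sub_pos.2 hx)).2 (by linarith))

theorem adaptive_sampler_is_DP_general (k c : ℕ) (hk : 2 ≤ k) (hc : c ≠ 0) (n y : ℕ) :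
    fAdapt k c n y ≤ (((k : ℝ) + 1) / ((k : ℝ) - 1)) ^ c * fAdapt k c (n + 1) y ∧
    fAdapt k c (n + 1) y ≤ (((k : ℝ) + 1) / ((k : ℝ) - 1)) ^ c * fAdapt k c n y := by
  have hk₀ : 0 < k := by omega
  have hk₁ : (1 : ℝ) < k := by exact_mod_cast hk
  have hnonneg (m : ℕ) := fAdapt_nonneg c m hk₀ y
  constructor
  · exact le_div_pow_mul_of_one_sub_mul_le hk₁ hc (hnonneg n)
      (one_sub_mul_fAdapt_le_succ_left c n hk₀ y)
  · exact le_div_pow_mul_of_one_sub_mul_le hk₁ hc (hnonneg (n + 1))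
      ((one_sub_mul_fAdapt_succ_left_le c n hk₀ y).trans
        (le_mul_of_one_le_left (hnonneg n) (one_le_add_one_div_pow c hk₀)))

/-- The adaptive sampler is `ε`-DP with `ε = 2c·ln((k+1)/(k-1))` with respect to insertion or
deletion of one record: both likelihood ratios are bounded by `((k+1)/(k-1))^{2c} = e^ε`. -/
theorem adaptive_sampler_is_DP (k c : ℕ) (hk : 2 ≤ k) (hc : 2 ≤ c) :
    ∀ n y : ℕ,
      fAdapt k c n y ≤ (((k : ℝ) + 1) / ((k : ℝ) - 1)) ^ (2 * c) * fAdapt k c (n + 1) y ∧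
      fAdapt k c (n + 1) y ≤ (((k : ℝ) + 1) / ((k : ℝ) - 1)) ^ (2 * c) * fAdapt k c n y := by
  intro n y
  have hweaken (m : ℕ) := mul_le_mul_of_nonneg_right
    (monotone_add_one_div_sub_one_pow (x := k) (by exact_mod_cast hk) (by omega : c ≤ 2 * c))
    (fAdapt_nonneg c m (by omega : 0 < k) y)
  exact (adaptive_sampler_is_DP_general k c hk (by omega) n y).imp
    (·.trans (hweaken (n + 1))) (·.trans (hweaken n))
end

section
/- Fix integers ℓ < μ < u with u − ℓ ≥ 3 (so the support {ℓ, ℓ+1, …, u} contains at least four points) and a real scale s > 0. Let Y be the censored discrete Laplace random variable CensoredDiscreteLaplace(μ, s, ℓ, u). Then there exists an integer k with ℓ ≤ k ≤ u such that Pr[Y = k] is not a dyadic rational; that is, at least one output mass is not of the form t/2^N with t, N nonnegative integers. -/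
/-- A real number is dyadic if it equals `t/2^N` for some nonnegative integers `t` and `N`. -/
def IsDyadic (x : ℝ) : Prop := ∃ t N : ℕ, x = (t : ℝ) / 2 ^ N

/-!
Put `q = exp (-1/s)`, so that the uncensored masses are `c * q ^ |k - μ|` with
`c = (1 - q) / (1 + q)`. If two neighbouring masses are dyadic, their quotient shows that `q` is
rational, say `q = a / b` in lowest terms with `0 < a < b`, and one of the masses is
`(b - a) * a ^ n / ((b + a) * b ^ n)` with `n ≠ 0`. Since `b` is coprime to `a` and to `b - a`, it
must be a power of two, so `a` is odd; then `b + a` is odd and coprime to `a` and `b - a`, and it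
survives in the denominator. A support of at least four points has two neighbouring interior points.

To avoid truncated subtraction, `b` is written as `a + d`.
-/

section Arithmetic

variable {a d m N : ℕ}

lemma even_add_of_coprime_of_dvd (had : a.Coprime d) (hne : a + d ≠ 1)
    (hdvd : a + d ∣ d * a ^ m * 2 ^ N) : Even (a + d) := by
  have hd : (a + d).Coprime d := Nat.coprime_add_self_left.mpr had
  have ha : (a + d).Coprime (a ^ m) := (Nat.coprime_self_add_left.mpr had.symm).pow_right m
  have hpow : a + d ∣ 2 ^ N := (hd.mul_right ha).dvd_of_dvd_mul_left hdvd
  obtain ⟨j, -, hj⟩ := (Nat.dvd_prime_pow Nat.prime_two).mp hpow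
  have hj0 : j ≠ 0 := by
    rintro rfl
    exact hne hj
  exact hj ▸ even_two.pow_of_ne_zero hj0

lemma coprime_two_mul_add_of_even_add (had : a.Coprime d) (heven : Even (a + d)) :
    (2 * a + d).Coprime (d * a ^ m * 2 ^ N) := by
  have hd : Odd d := by
    by_contra hd
    rw [Nat.not_odd_iff_even] at hd
    exact Nat.not_coprime_of_dvd_of_dvd one_lt_two
      ((Nat.even_add.mp heven).mpr hd).two_dvd hd.two_dvd had
  have hcop_d : (2 * a + d).Coprime d :=
    Nat.coprime_add_self_left.mpr ((Nat.coprime_two_left.mpr hd).mul_left had)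
  have hcop_a : (2 * a + d).Coprime a :=
    (Nat.coprime_mul_right_add_left d a 2).mpr had.symm
  have hcop_two : (2 * a + d).Coprime 2 :=
    Nat.coprime_two_right.mpr ((even_two_mul a).add_odd hd)
  exact (hcop_d.mul_right (hcop_a.pow_right m)).mul_right (hcop_two.pow_right N)

lemma not_two_mul_add_mul_add_dvd (had : a.Coprime d) (ha : 0 < a) (hd : 0 < d) :
    ¬ (2 * a + d) * (a + d) ∣ d * a ^ m * 2 ^ N := by
  intro hdvd
  have heven : Even (a + d) :=
    even_add_of_coprime_of_dvd had (by omega) (dvd_of_mul_left_dvd hdvd)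
  have hone : 2 * a + d = 1 :=
    (coprime_two_mul_add_of_even_add had heven).eq_one_of_dvd (dvd_of_mul_right_dvd hdvd)
  omega

end Arithmetic

lemma exists_coprime_eq_div_add {q : ℚ} (hq0 : 0 < q) (hq1 : q < 1) :
    ∃ a d : ℕ, a.Coprime d ∧ 0 < a ∧ 0 < d ∧ q = a / (a + d) := by
  obtain ⟨a, ha⟩ := Int.eq_ofNat_of_zero_le (Rat.num_nonneg.mpr hq0.le)
  have hq : q = a / q.den := by
    rw [← Int.cast_natCast a, ← ha, Rat.num_div_den]
  have hlt : a < q.den := by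
    have hnum : q.num < q.den := Rat.num_lt_denom_iff.mpr hq1
    omega
  have hpos : 0 < a := by
    have hnum : 0 < q.num := Rat.num_pos.mpr hq0
    omega
  have hcop : a.Coprime q.den := by
    simpa only [ha, Int.natAbs_natCast] using q.reduced
  refine ⟨a, q.den - a, ?_, hpos, Nat.sub_pos_of_lt hlt, ?_⟩
  · exact (Nat.coprime_sub_self_right hlt.le).mpr hcop
  · rw [Nat.cast_sub hlt.le, add_sub_cancel]
    exact hq

lemma IsDyadic.exists_ratCast_eq {x : ℝ} (hx : IsDyadic x) : ∃ r : ℚ, (r : ℝ) = x := by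
  obtain ⟨t, N, rfl⟩ := hx
  exact ⟨t / 2 ^ N, by push_cast; rfl⟩

lemma not_isDyadic_one_sub_div_mul_pow_ratCast {q : ℚ} (hq0 : 0 < q) (hq1 : q < 1)
    {n : ℕ} (hn : n ≠ 0) :
    ¬ IsDyadic ((1 - q) / (1 + q) * q ^ n) := by
  rintro ⟨t, N, h⟩
  obtain ⟨a, d, had, ha, hd, rfl⟩ := exists_coprime_eq_div_add hq0 hq1
  have hfrac : d * a ^ n * 2 ^ N = t * ((2 * a + d) * (a + d) ^ n) := by
    have : (0 : ℝ) < a := Nat.cast_pos.mpr ha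
    have hone_sub : 1 - (a : ℝ) / (a + d) = d / (a + d) := by field_simp; ring
    have hone_add : 1 + (a : ℝ) / (a + d) = (2 * a + d) / (a + d) := by field_simp; ring
    push_cast at h
    rw [hone_sub, hone_add, div_div_div_cancel_right₀ (by positivity), div_pow,
      div_mul_div_comm, div_eq_div_iff (by positivity) (by positivity)] at h
    exact_mod_cast h
  have hdvd : (2 * a + d) * (a + d) ∣ d * a ^ n * 2 ^ N :=
    (mul_dvd_mul_left _ (dvd_pow_self _ hn)).trans (Dvd.intro_left t hfrac.symm)
  exact not_two_mul_add_mul_add_dvd had ha hd hdvd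

lemma not_isDyadic_one_sub_div_mul_pow_or_succ {q : ℝ} (hq0 : 0 < q) (hq1 : q < 1) (n : ℕ) :
    ¬ IsDyadic ((1 - q) / (1 + q) * q ^ n) ∨ ¬ IsDyadic ((1 - q) / (1 + q) * q ^ (n + 1)) := by
  rw [← not_and_or]
  rintro ⟨hn, hsucc⟩
  obtain ⟨x, hx⟩ := hn.exists_ratCast_eq
  obtain ⟨y, hy⟩ := hsucc.exists_ratCast_eq
  have hc : (1 - q) / (1 + q) ≠ 0 := (div_pos (sub_pos.mpr hq1) (by positivity)).ne'
  have hq : q = (y / x : ℚ) := by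
    rw [Rat.cast_div, hx, hy, mul_div_mul_left _ _ hc, pow_succ,
      mul_div_cancel_left₀ _ (by positivity)]
  rw [hq] at hq0 hq1 hsucc
  exact not_isDyadic_one_sub_div_mul_pow_ratCast (by exact_mod_cast hq0) (by exact_mod_cast hq1)
    n.succ_ne_zero hsucc

lemma dLapPMF_eq_mul_pow_natAbs (μ : ℤ) (s : ℝ) (k : ℤ) :
    dLapPMF μ s k = (1 - Real.exp (-1 / s)) / (1 + Real.exp (-1 / s)) *
      Real.exp (-1 / s) ^ (k - μ).natAbs := by
  have hc : (Real.exp (1 / s) - 1) / (Real.exp (1 / s) + 1) =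
      (1 - Real.exp (-1 / s)) / (1 + Real.exp (-1 / s)) := by
    rw [neg_div, Real.exp_neg]
    field_simp
  have hpow : Real.exp (-|(k : ℝ) - μ| / s) = Real.exp (-1 / s) ^ (k - μ).natAbs := by
    rw [← Real.exp_nat_mul, Nat.cast_natAbs]
    push_cast
    ring_nf
  rw [dLapPMF, hc, hpow]

lemma not_isDyadic_dLapPMF_or_succ (μ : ℤ) {s : ℝ} (hs : 0 < s) (k : ℤ) :
    ¬ IsDyadic (dLapPMF μ s k) ∨ ¬ IsDyadic (dLapPMF μ s (k + 1)) := by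
  have hq1 : Real.exp (-1 / s) < 1 :=
    Real.exp_lt_one_iff.mpr (div_neg_of_neg_of_pos neg_one_lt_zero hs)
  have hcases := not_isDyadic_one_sub_div_mul_pow_or_succ (Real.exp_pos (-1 / s)) hq1
  rw [dLapPMF_eq_mul_pow_natAbs, dLapPMF_eq_mul_pow_natAbs]
  obtain hμk | hkμ := le_or_gt μ k
  · have hdist : (k + 1 - μ).natAbs = (k - μ).natAbs + 1 := by omega
    rw [hdist]
    exact hcases _
  · have hdist : (k - μ).natAbs = (k + 1 - μ).natAbs + 1 := by omega
    rw [hdist]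
    exact (hcases _).symm

lemma cdLapPMF_of_mem_Ioo (μ : ℤ) (s : ℝ) {ℓ u k : ℤ} (hk : k ∈ Set.Ioo ℓ u) :
    cdLapPMF μ s ℓ u k = dLapPMF μ s k := by
  rw [cdLapPMF, if_neg hk.1.ne', if_neg hk.2.ne, if_pos (Set.mem_Ioo.mp hk)]

theorem no_fully_dyadic_censored_discrete_laplace_general
    (ℓ μ u : ℤ) (s : ℝ) (hs : 0 < s) (hsupp : 3 ≤ u - ℓ) :
    ∃ k ∈ Set.Ioo ℓ u, ¬ IsDyadic (cdLapPMF μ s ℓ u k) := by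
  have hfst : ℓ + 1 ∈ Set.Ioo ℓ u := ⟨by omega, by omega⟩
  have hsnd : ℓ + 1 + 1 ∈ Set.Ioo ℓ u := ⟨by omega, by omega⟩
  obtain h | h := not_isDyadic_dLapPMF_or_succ μ hs (ℓ + 1)
  · exact ⟨ℓ + 1, hfst, cdLapPMF_of_mem_Ioo μ s hfst ▸ h⟩
  · exact ⟨ℓ + 1 + 1, hsnd, cdLapPMF_of_mem_Ioo μ s hsnd ▸ h⟩

/-- No fully-dyadic censored discrete Laplace: if the support `{ℓ, …, u}` has at least four
points, some output mass of `CensoredDiscreteLaplace(μ, s, ℓ, u)` is not a dyadic rational. -/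
theorem no_fully_dyadic_censored_discrete_laplace
    (ℓ μ u : ℤ) (s : ℝ) (hs : 0 < s) (hℓμ : ℓ < μ) (hμu : μ < u) (hsupp : 3 ≤ u - ℓ) :
    ∃ k : ℤ, ℓ ≤ k ∧ k ≤ u ∧ ¬ IsDyadic (cdLapPMF μ s ℓ u k) := by
  obtain ⟨k, hk, h⟩ := no_fully_dyadic_censored_discrete_laplace_general ℓ μ u s hs hsupp
  exact ⟨k, hk.1.le, hk.2.le, h⟩
end

section
/- Let q be a rational number with 0 < q < 1 that is not dyadic (i.e., when written in lowest terms q = r/d, the denominator d has an odd prime factor). Then ((1 − q)/(1 + q)) · q is not a dyadic rational. -/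
/-- A rational number is dyadic if it equals `t/2^N` for some nonnegative integers `t` and `N`. -/
def IsDyadicQ (x : ℚ) : Prop := ∃ t N : ℕ, x = (t : ℚ) / 2 ^ N

/-!
The mass `m = (1 - x) / (1 + x) * x` satisfies `x ^ 2 + (m - 1) * x + m = 0`. If `s * m = a` is
integral, then `s * x` is a root of the monic polynomial `X ^ 2 + (a - s) * X + s * a`, so it is
integral as well: over `ℤ`, every denominator of `m` is also a denominator of `x`.
-/

open Polynomial in
lemma isIntegral_of_sq_add_mul_add_eq_zero {R A : Type*} [CommRing R] [Ring A] [Algebra R A]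
    {y : A} {b c : R} (h : y ^ 2 + algebraMap R A b * y + algebraMap R A c = 0) :
    IsIntegral R y := by
  nontriviality R
  exact ⟨X ^ 2 + C b * X + C c, (isMonicOfDegree_add_add_two b c).monic, by simpa using h⟩

lemma isIntegral_smul_of_smul_adjacent_mass_mem_range {R K : Type*} [CommRing R] [Field K]
    [Algebra R K] {s : R} {x : K}
    (h : s • ((1 - x) / (1 + x) * x) ∈ Set.range (algebraMap R K)) : IsIntegral R (s • x) := by
  obtain ⟨a, ha⟩ := h
  by_cases hx : 1 + x = 0
  · have hneg : x = -1 := (neg_eq_of_add_eq_zero_right hx).symm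
    rw [hneg]
    exact isIntegral_one.neg.smul s
  · have hmass : (1 - x) / (1 + x) * x * (1 + x) = (1 - x) * x := by field_simp
    refine isIntegral_of_sq_add_mul_add_eq_zero (b := a - s) (c := s * a) ?_
    rw [map_sub, map_mul, ha]
    simp only [Algebra.smul_def]
    linear_combination algebraMap R K s ^ 2 * hmass

lemma isDyadicQ_iff {x : ℚ} :
    IsDyadicQ x ↔ 0 ≤ x ∧ ∃ N : ℕ, (2 ^ N : ℤ) • x ∈ Set.range (algebraMap ℤ ℚ) := by
  constructor
  · rintro ⟨t, N, rfl⟩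
    exact ⟨by positivity, N, t, by simp [field]⟩
  · rintro ⟨hx, N, a, ha⟩
    have ha_eq : (a : ℚ) = x * 2 ^ N := by simpa [mul_comm] using ha
    have ha_nonneg : 0 ≤ a := by
      rw [← Int.cast_nonneg_iff (R := ℚ), ha_eq]
      positivity
    lift a to ℕ using ha_nonneg
    exact ⟨a, N, eq_div_of_mul_eq (by positivity) (by exact_mod_cast ha_eq.symm)⟩

theorem adjacent_mass_not_dyadic_general {R K : Type*} [CommRing R] [Field K] [Algebra R K]
    [IsIntegrallyClosedIn R K] {s : R} {x : K} (hx : s • x ∉ Set.range (algebraMap R K)) :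
    s • ((1 - x) / (1 + x) * x) ∉ Set.range (algebraMap R K) := fun hmass ↦
  hx (IsIntegrallyClosedIn.isIntegral_iff.1 (isIntegral_smul_of_smul_adjacent_mass_mem_range hmass))

/-- If `q ∈ (0,1)` is a rational that is not dyadic, then `((1 - q)/(1 + q))·q` is not a
dyadic rational. -/
theorem adjacent_mass_not_dyadic
    (q : ℚ) (hq0 : 0 < q) (hq1 : q < 1) (hnd : ¬ IsDyadicQ q) :
    ¬ IsDyadicQ (((1 - q) / (1 + q)) * q) := by
  intro h
  obtain ⟨-, N, hN⟩ := isDyadicQ_iff.1 h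
  exact adjacent_mass_not_dyadic_general (fun hq ↦ hnd (isDyadicQ_iff.2 ⟨hq0.le, N, hq⟩)) hN
end

section
/- Let p ∈ (0,1) and μ ∈ ℤ, and let g_μ and g_{μ+1} be the probability mass functions of the Dyadic Symmetric Geometric distributions DSG(μ, p) and DSG(μ+1, p). Then for every z ∈ ℤ, g_μ(z) ≤ (1/(1−p)) · g_{μ+1}(z) and g_{μ+1}(z) ≤ (1/(1−p)) · g_μ(z); that is, shifting the center by one changes every probability mass by at most a single factor of 1 − p. -/
/-- Probability mass function of the Dyadic Symmetric Geometric distribution `DSG(μ, p)` on ℤ: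
`g_μ(z) = (1/2)·p·(1-p)^{μ-z}` for `z ≤ μ` and `g_μ(z) = (1/2)·p·(1-p)^{z-μ-1}` for `z ≥ μ+1`. -/
noncomputable def dsgPMF (μ : ℤ) (p : ℝ) (z : ℤ) : ℝ :=
  if z ≤ μ then (1 / 2) * p * (1 - p) ^ (μ - z).toNat
  else (1 / 2) * p * (1 - p) ^ (z - μ - 1).toNat

/-- The number of geometric failures behind the outcome `z` of `DSG(μ, p)`, i.e. the value of `G`
in `z = μ - G` or `z = μ + 1 + G`. Exactly one of these gives `G ≥ 0`, and it is the larger one. -/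
def dsgExponent (μ z : ℤ) : ℕ :=
  (max (μ - z) (z - μ - 1)).toNat

theorem dsgPMF_eq_mul_pow_dsgExponent (μ : ℤ) (p : ℝ) (z : ℤ) :
    dsgPMF μ p z = 1 / 2 * p * (1 - p) ^ dsgExponent μ z := by
  unfold dsgPMF dsgExponent
  split_ifs with hz
  · rw [max_eq_left (by lia)]
  · rw [max_eq_right (by lia)]

theorem dsgExponent_le_add_natAbs_sub (μ ν z : ℤ) :
    dsgExponent ν z ≤ dsgExponent μ z + (μ - ν).natAbs := by
  unfold dsgExponent
  lia

theorem pow_le_one_div_pow_mul_pow {K : Type*} [Field K] [LinearOrder K] [IsStrictOrderedRing K]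
    {q : K} (hq0 : 0 < q) (hq1 : q ≤ 1) {k m n : ℕ} (h : n ≤ m + k) :
    q ^ m ≤ (1 / q) ^ k * q ^ n := by
  rw [one_div_pow, one_div_mul_eq_div, le_div_iff₀ (pow_pos hq0 k), ← pow_add]
  exact pow_le_pow_of_le_one hq0.le hq1 h

theorem dsg_shift_ratio_general {p : ℝ} (hp0 : 0 ≤ p) (hp1 : p < 1) (μ ν z : ℤ) :
    dsgPMF μ p z ≤ (1 / (1 - p)) ^ (μ - ν).natAbs * dsgPMF ν p z := by
  have hpow : (1 - p) ^ dsgExponent μ z ≤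
      (1 / (1 - p)) ^ (μ - ν).natAbs * (1 - p) ^ dsgExponent ν z :=
    pow_le_one_div_pow_mul_pow (sub_pos.2 hp1) (sub_le_self 1 hp0)
      (dsgExponent_le_add_natAbs_sub μ ν z)
  rw [dsgPMF_eq_mul_pow_dsgExponent, dsgPMF_eq_mul_pow_dsgExponent, mul_left_comm]
  exact mul_le_mul_of_nonneg_left hpow (by positivity)

/-- Shifting the center of the Dyadic Symmetric Geometric distribution by one changes every
probability mass by at most a single factor of `1 - p`. -/
theorem dsg_shift_ratio (p : ℝ) (hp0 : 0 < p) (hp1 : p < 1) (μ : ℤ) :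
    ∀ z : ℤ,
      dsgPMF μ p z ≤ (1 / (1 - p)) * dsgPMF (μ + 1) p z ∧
      dsgPMF (μ + 1) p z ≤ (1 / (1 - p)) * dsgPMF μ p z := fun z =>
  ⟨by simpa using dsg_shift_ratio_general hp0.le hp1 μ (μ + 1) z,
    by simpa using dsg_shift_ratio_general hp0.le hp1 (μ + 1) μ z⟩
end

section
/- Fix integers ℓ < μ < u with μ + 1 ≤ u, and let p ∈ (0,1). Let Y = max(ℓ, min(Z, u)) where Z ~ DSG(μ, p), and Y′ = max(ℓ, min(Z′, u)) where Z′ ~ DSG(μ+1, p). Then for every integer y with ℓ ≤ y ≤ u, Pr[Y = y] ≤ (1/(1−p)) · Pr[Y′ = y] and Pr[Y′ = y] ≤ (1/(1−p)) · Pr[Y = y]. Hence the censored Dyadic Symmetric Geometric mechanism is ε-differentially private with ε = ln(1/(1−p)) for statistics of sensitivity 1. -/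
/-- Probability mass function of the censored Dyadic Symmetric Geometric distribution, the
distribution of `Y = max(ℓ, min(Z, u))` for `Z ~ DSG(μ, p)`: the mass at `ℓ` is `Pr[Z ≤ ℓ]`,
the mass at `u` is `Pr[Z ≥ u]`, and interior points keep the mass of `Z`. -/
noncomputable def cdsgPMF (μ : ℤ) (p : ℝ) (ℓ u : ℤ) (y : ℤ) : ℝ :=
  if y = ℓ then ∑' z : ℤ, Set.indicator {z : ℤ | z ≤ ℓ} (dsgPMF μ p) z
  else if y = u then ∑' z : ℤ, Set.indicator {z : ℤ | u ≤ z} (dsgPMF μ p) z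
  else if ℓ < y ∧ y < u then dsgPMF μ p y
  else 0

/-!
The exponent of `1 - p` in `g_μ(z)` is the distance from `z` to the pair `{μ, μ + 1}`. It changes
by at most `|μ - ν|` when the center moves from `μ` to `ν`, so the two mass functions differ by at
most a factor `(1 / (1 - p)) ^ |μ - ν|` at each point. Each mass of the censored law is the sum of
`g_μ` over a fiber of the clamping map `z ↦ max ℓ (min z u)`, and summing over a fiber preserves
the bound.
-/

theorem tsum_indicator_le_mul_tsum_indicator {α : Type*} {f g : α → ℝ} {c : ℝ} {s : Set α}
    (hf : Summable f) (hg : Summable g) (hfg : ∀ x ∈ s, f x ≤ c * g x) :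
    ∑' x, s.indicator f x ≤ c * ∑' x, s.indicator g x := by
  simp only [← tsum_subtype, ← tsum_mul_left]
  exact (hf.subtype s).tsum_le_tsum (fun x ↦ hfg x x.2) ((hg.subtype s).mul_left c)

/-- The distance from `z` to the pair `{μ, μ + 1}`, which is the exponent of `1 - p` in
`dsgPMF μ p z`. The maximum is never negative, so `Int.toNat` does not truncate. -/
def dsgDist (μ z : ℤ) : ℕ :=
  (max (μ - z) (z - μ - 1)).toNat

theorem dsgDist_le_dsgDist_add_natAbs (μ ν z : ℤ) :
    dsgDist ν z ≤ dsgDist μ z + (μ - ν).natAbs := by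
  simp only [dsgDist]
  omega

theorem summable_pow_dsgDist (μ : ℤ) {r : ℝ} (hr : |r| < 1) :
    Summable fun z ↦ r ^ dsgDist μ z := by
  have right_dist (n : ℕ) : dsgDist μ (n + (μ + 1)) = n := by simp only [dsgDist]; omega
  have left_dist (n : ℕ) : dsgDist μ (-(n + 1) + (μ + 1)) = n := by simp only [dsgDist]; omega
  have geometric : Summable fun n : ℕ ↦ r ^ n := summable_geometric_of_abs_lt_one hr
  rw [← (Equiv.addRight (μ + 1)).summable_iff]
  apply Summable.of_nat_of_neg_add_one
  · simpa only [Function.comp_apply, Equiv.coe_addRight, right_dist] using geometric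
  · simpa only [Function.comp_apply, Equiv.coe_addRight, left_dist] using geometric

theorem dsgPMF_eq_mul_pow_dsgDist (μ : ℤ) (p : ℝ) (z : ℤ) :
    dsgPMF μ p z = 1 / 2 * p * (1 - p) ^ dsgDist μ z := by
  rw [dsgPMF, dsgDist]
  split_ifs with hz
  · rw [max_eq_left (by omega)]
  · rw [max_eq_right (by omega)]

theorem summable_dsgPMF (μ : ℤ) {p : ℝ} (hp : |1 - p| < 1) : Summable (dsgPMF μ p) :=
  ((summable_pow_dsgDist μ hp).mul_left (1 / 2 * p)).congr fun z ↦
    (dsgPMF_eq_mul_pow_dsgDist μ p z).symm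

theorem dsgPMF_le_pow_natAbs_mul_dsgPMF (μ ν : ℤ) {p : ℝ} (hp0 : 0 ≤ p) (hp1 : p < 1) (z : ℤ) :
    dsgPMF μ p z ≤ (1 / (1 - p)) ^ (μ - ν).natAbs * dsgPMF ν p z := by
  have hq0 : 0 < 1 - p := sub_pos.2 hp1
  have hdist : dsgDist ν z ≤ dsgDist μ z + (μ - ν).natAbs := dsgDist_le_dsgDist_add_natAbs μ ν z
  rw [one_div_pow, one_div_mul_eq_div, le_div_iff₀ (pow_pos hq0 _)]
  calc dsgPMF μ p z * (1 - p) ^ (μ - ν).natAbs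
      = 1 / 2 * p * (1 - p) ^ (dsgDist μ z + (μ - ν).natAbs) := by
        rw [dsgPMF_eq_mul_pow_dsgDist, pow_add, mul_assoc]
    _ ≤ 1 / 2 * p * (1 - p) ^ dsgDist ν z := by
        gcongr _ * ?_
        exact pow_le_pow_of_le_one hq0.le (sub_le_self 1 hp0) hdist
    _ = dsgPMF ν p z := (dsgPMF_eq_mul_pow_dsgDist ν p z).symm

theorem cdsgPMF_eq_tsum_indicator_clamp_eq (μ : ℤ) (p : ℝ) {ℓ u : ℤ} (hℓu : ℓ < u) (y : ℤ) :
    cdsgPMF μ p ℓ u y =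
      ∑' z, {z | max ℓ (min z u) = y}.indicator (dsgPMF μ p) z := by
  rw [cdsgPMF]
  split_ifs with hyℓ hyu hy
  · have fiber : {z | max ℓ (min z u) = y} = {z | z ≤ ℓ} := by
      ext z; simp only [Set.mem_ofPred_eq]; omega
    rw [fiber]
  · have fiber : {z | max ℓ (min z u) = y} = {z | u ≤ z} := by
      ext z; simp only [Set.mem_ofPred_eq]; omega
    rw [fiber]
  · have fiber : {z | max ℓ (min z u) = y} = {y} := by
      ext z; simp only [Set.mem_ofPred_eq, Set.mem_singleton_iff]; omega
    rw [fiber, ← tsum_subtype, tsum_singleton]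
  · have fiber : {z | max ℓ (min z u) = y} = ∅ := by
      ext z; simp only [Set.mem_ofPred_eq, Set.mem_empty_iff_false, iff_false]; omega
    rw [fiber, Set.indicator_empty, tsum_zero]

theorem censored_dsg_is_DP_general (μ ν : ℤ) {ℓ u : ℤ} (hℓu : ℓ < u)
    {p : ℝ} (hp0 : 0 < p) (hp1 : p < 1) (y : ℤ) :
    cdsgPMF μ p ℓ u y ≤ (1 / (1 - p)) ^ (μ - ν).natAbs * cdsgPMF ν p ℓ u y := by
  have hp : |1 - p| < 1 := abs_lt.2 ⟨by linarith, by linarith⟩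
  simp only [cdsgPMF_eq_tsum_indicator_clamp_eq _ _ hℓu]
  exact tsum_indicator_le_mul_tsum_indicator (summable_dsgPMF μ hp) (summable_dsgPMF ν hp)
    fun z _ ↦ dsgPMF_le_pow_natAbs_mul_dsgPMF μ ν hp0.le hp1 z

/-- The censored Dyadic Symmetric Geometric mechanism is `ε`-differentially private with
`ε = ln(1/(1-p))` for statistics of sensitivity 1: for centers `μ` and `μ+1` within `(ℓ, u)`,
every clamped output mass changes by at most a factor `1/(1-p)`. -/
theorem censored_dsg_is_DP
    (ℓ μ u : ℤ) (hℓμ : ℓ < μ) (hμu : μ < u)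
    (p : ℝ) (hp0 : 0 < p) (hp1 : p < 1) :
    ∀ y : ℤ, ℓ ≤ y → y ≤ u →
      cdsgPMF μ p ℓ u y ≤ (1 / (1 - p)) * cdsgPMF (μ + 1) p ℓ u y ∧
      cdsgPMF (μ + 1) p ℓ u y ≤ (1 / (1 - p)) * cdsgPMF μ p ℓ u y := by
  intro y _ _
  have hDP (ν ξ : ℤ) := censored_dsg_is_DP_general ν ξ (hℓμ.trans hμu) hp0 hp1 y
  exact ⟨by simpa using hDP μ (μ + 1), by simpa using hDP (μ + 1) μ⟩
end
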